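/- arXiv:2603.25211 — 11 statements merged into one kernel-verified Lean document; each statement's English description precedes it below -/
import Mathlib

section
/- (Sandwich property.) For every γ ∈ [−h, h] and every φ ∈ ℝ, S_{−h}(φ) ≤ S_γ(φ) ≤ S_h(φ); explicitly, S_{−h}(φ) equals (φ−h)²/(2L) for φ > h, (φ+h)²/(2L) for φ < −h, and 0 for |φ| ≤ h, while S_h(φ) equals ((φ+h)² − h²)/(2L) for φ > 0, ((φ−h)² − h²)/(2L) for φ < 0, and 0 at φ = 0. -/
/-- The family of storage functions `S_γ` for the backlash inductor. -/
noncomputable def Sfam (L h γ φ : ℝ) : ℝ :=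
  if (h - γ) / 2 < φ then (1 / (2 * L)) * ((φ + γ) ^ 2 - ((h + γ) / 2) ^ 2)
  else if φ < -((h - γ) / 2) then (1 / (2 * L)) * ((φ - γ) ^ 2 - ((h + γ) / 2) ^ 2)
  else 0

lemma key_nonneg {h γ x : ℝ} (h1 : -h ≤ γ) (hx : (h - γ) / 2 ≤ x) :
    0 ≤ (x + γ) ^ 2 - ((h + γ) / 2) ^ 2 := by
  have := mul_nonneg (sub_nonneg.2 hx) (show 0 ≤ x + (h + 3 * γ) / 2 by linarith)
  nlinarith

lemma key_mono {h γ δ x : ℝ} (h1 : -h ≤ γ) (h2 : γ ≤ δ) (hx : (h - γ) / 2 ≤ x) :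
    (x + γ) ^ 2 - ((h + γ) / 2) ^ 2 ≤ (x + δ) ^ 2 - ((h + δ) / 2) ^ 2 := by
  have := mul_le_mul (show x - (h - γ) / 2 ≤ x - (h - δ) / 2 by linarith)
    (show x + (h + 3 * γ) / 2 ≤ x + (h + 3 * δ) / 2 by linarith) (by linarith) (by linarith)
  nlinarith

lemma Sfam_mono {L h γ δ : ℝ} (hL : 0 < L) (h1 : -h ≤ γ) (h2 : γ ≤ δ) (h3 : δ ≤ h) (φ : ℝ) :
    Sfam L h γ φ ≤ Sfam L h δ φ := by
  have hc : 0 ≤ 1 / (2 * L) := by positivity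
  have e : ∀ a : ℝ, (φ - a) ^ 2 = (-φ + a) ^ 2 := fun a => by ring
  unfold Sfam
  simp only [e]
  split_ifs
  all_goals first
    | (exfalso; linarith)
    | exact le_rfl
    | exact mul_le_mul_of_nonneg_left (key_mono h1 h2 (by linarith)) hc
    | exact mul_nonneg hc (key_nonneg (by linarith) (by linarith))

theorem stmt4 (L h : ℝ) (hL : 0 < L) (hh : 0 ≤ h) :
    (∀ γ ∈ Set.Icc (-h) h, ∀ φ : ℝ,
        Sfam L h (-h) φ ≤ Sfam L h γ φ ∧ Sfam L h γ φ ≤ Sfam L h h φ) ∧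
    (∀ φ : ℝ, h < φ → Sfam L h (-h) φ = (φ - h) ^ 2 / (2 * L)) ∧
    (∀ φ : ℝ, φ < -h → Sfam L h (-h) φ = (φ + h) ^ 2 / (2 * L)) ∧
    (∀ φ : ℝ, |φ| ≤ h → Sfam L h (-h) φ = 0) ∧
    (∀ φ : ℝ, 0 < φ → Sfam L h h φ = ((φ + h) ^ 2 - h ^ 2) / (2 * L)) ∧
    (∀ φ : ℝ, φ < 0 → Sfam L h h φ = ((φ - h) ^ 2 - h ^ 2) / (2 * L)) ∧
    Sfam L h h 0 = 0 := by
  refine ⟨fun γ hγ φ => ⟨Sfam_mono hL le_rfl hγ.1 hγ.2 φ, Sfam_mono hL hγ.1 hγ.2 le_rfl φ⟩,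
    fun φ hφ => ?_, fun φ hφ => ?_, fun φ hφ => ?_, fun φ hφ => ?_, fun φ hφ => ?_, ?_⟩
  · rw [Sfam, if_pos (by linarith)]; ring
  · rw [Sfam, if_neg (by linarith), if_pos (by linarith)]; ring
  · have := abs_le.1 hφ
    rw [Sfam, if_neg (by linarith), if_neg (by linarith)]
  · rw [Sfam, if_pos (by linarith)]; ring
  · rw [Sfam, if_neg (by linarith), if_pos (by linarith)]; ring
  · simp [Sfam]
end

section
/- (Proposition 1: dissipation inequality for the family of storage functions.) For every γ ∈ [−h, h], every admissible backlash trajectory (φ, I), and all t₀ ≤ t₁, one has S_γ(φ(t₁)) ≤ S_γ(φ(t₀)) + ∫_{t₀}^{t₁} I(t)·φ'(t) dt; that is, each S_γ is a storage function for the backlash inductor with respect to the supply rate I·V, where V = φ'. -/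
/-- A pair `(φ, I)` is an admissible backlash trajectory. -/
def AdmissibleBacklash (L h : ℝ) (φ I : ℝ → ℝ) : Prop :=
  ContDiff ℝ 1 φ ∧
  ∀ t : ℝ, (0 < deriv φ t → I t = (φ t + h) / L) ∧
           (deriv φ t < 0 → I t = (φ t - h) / L)

theorem Sfam_key (L h γ x y : ℝ) (hL : 0 < L) (h1 : -h ≤ γ) (h2 : γ ≤ h) :
    Sfam L h γ y - Sfam L h γ x ≤ (1 / (2 * L)) * (y ^ 2 - x ^ 2 + 2 * h * |y - x|) := by
  have hp : 0 ≤ 1 / (2 * L) := by positivity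
  have e : ∀ z, Sfam L h γ z = (1 / (2 * L)) * (if (h - γ) / 2 < z then ((z + γ) ^ 2 - ((h + γ) / 2) ^ 2)
      else if z < -((h - γ) / 2) then ((z - γ) ^ 2 - ((h + γ) / 2) ^ 2) else 0) := by
    intro z
    unfold Sfam
    split_ifs <;> simp
  rw [e, e, ← mul_sub]
  apply mul_le_mul_of_nonneg_left _ hp
  obtain ⟨a, rfl⟩ : ∃ a, γ = h - 2 * a := ⟨(h - γ) / 2, by ring⟩
  have ha : 0 ≤ a := by linarith
  have ha' : a ≤ h := by linarith
  have ea : (h - (h - 2 * a)) / 2 = a := by ring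
  rw [ea]
  rcases abs_cases (y - x) with ⟨h3, h4⟩ | ⟨h3, h4⟩ <;> rw [h3] <;> split_ifs <;>
    (try simp only [not_lt] at *) <;>
    first
    | (exfalso; linarith)
    | nlinarith

theorem stmt6 (L h : ℝ) (hL : 0 < L) (hh : 0 ≤ h) :
    ∀ γ ∈ Set.Icc (-h) h, ∀ φ I : ℝ → ℝ, AdmissibleBacklash L h φ I →
      ∀ t₀ t₁ : ℝ, t₀ ≤ t₁ →
        Sfam L h γ (φ t₁) ≤ Sfam L h γ (φ t₀) + ∫ t in t₀..t₁, I t * deriv φ t := by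
  rintro γ ⟨h1, h2⟩ φ I ⟨hφ, hI⟩ t₀ t₁ ht
  have hd : Differentiable ℝ φ := hφ.differentiable (by norm_num)
  have hc : Continuous (deriv φ) := hφ.continuous_deriv (by norm_num)
  have hφc : Continuous φ := hφ.continuous
  have e : ∀ t, I t * deriv φ t =
      (1 / (2 * L)) * (2 * φ t * deriv φ t + 2 * h * |deriv φ t|) := by
    intro t
    rcases lt_trichotomy (deriv φ t) 0 with h0 | h0 | h0
    · rw [(hI t).2 h0, abs_of_neg h0]; field_simp; ring
    · simp [h0]
    · rw [(hI t).1 h0, abs_of_pos h0]; field_simp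
  have i1 : ∫ t in t₀..t₁, 2 * φ t * deriv φ t = φ t₁ ^ 2 - φ t₀ ^ 2 := by
    apply intervalIntegral.integral_eq_sub_of_hasDerivAt (f := fun t => φ t ^ 2)
    · intro t _
      have := (hd t).hasDerivAt.pow 2
      have e2 : (2 * φ t * deriv φ t) = ((2 : ℕ) : ℝ) * φ t ^ (2 - 1) * deriv φ t := by simp
      rw [e2]
      exact this
    · exact Continuous.intervalIntegrable (by fun_prop) _ _
  have i2 : ∫ t in t₀..t₁, deriv φ t = φ t₁ - φ t₀ :=
    intervalIntegral.integral_eq_sub_of_hasDerivAt (fun t _ => (hd t).hasDerivAt)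
      (hc.intervalIntegrable _ _)
  have i3 : |φ t₁ - φ t₀| ≤ ∫ t in t₀..t₁, |deriv φ t| := by
    rw [← i2]
    exact intervalIntegral.abs_integral_le_integral_abs ht
  have i4 : ∫ t in t₀..t₁, I t * deriv φ t = (1 / (2 * L)) *
      (φ t₁ ^ 2 - φ t₀ ^ 2 + 2 * h * ∫ t in t₀..t₁, |deriv φ t|) := by
    simp_rw [e]
    rw [intervalIntegral.integral_const_mul, intervalIntegral.integral_add, i1,
      intervalIntegral.integral_const_mul]
    · exact Continuous.intervalIntegrable (by fun_prop) _ _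
    · exact Continuous.intervalIntegrable (by fun_prop) _ _
  have k := Sfam_key L h γ (φ t₀) (φ t₁) hL h1 h2
  have m : (1 / (2 * L)) * (φ t₁ ^ 2 - φ t₀ ^ 2 + 2 * h * |φ t₁ - φ t₀|) ≤ (1 / (2 * L)) *
      (φ t₁ ^ 2 - φ t₀ ^ 2 + 2 * h * ∫ t in t₀..t₁, |deriv φ t|) := by
    gcongr
  rw [i4]
  linarith
end

section
/- (Energy dissipated per hysteresis cycle.) Let (φ, I) be an admissible backlash trajectory and let t₀ ≤ t₁ ≤ t₂ be such that φ is monotone nondecreasing on [t₀, t₁], monotone nonincreasing on [t₁, t₂], φ(t₀) = φ(t₂) = φ₁ and φ(t₁) = φ₂. Then the total energy supplied over the closed cycle equals the enclosed area: ∫_{t₀}^{t₂} I(t)·φ'(t) dt = (2h/L)·(φ₂ − φ₁). -/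
theorem stmt7 (L h : ℝ) (hL : 0 < L) (hh : 0 ≤ h)
    (φ I : ℝ → ℝ) (hadm : AdmissibleBacklash L h φ I)
    (t₀ t₁ t₂ φ₁ φ₂ : ℝ) (h01 : t₀ ≤ t₁) (h12 : t₁ ≤ t₂)
    (hmono : MonotoneOn φ (Set.Icc t₀ t₁))
    (hanti : AntitoneOn φ (Set.Icc t₁ t₂))
    (h0 : φ t₀ = φ₁) (h2 : φ t₂ = φ₁) (h1 : φ t₁ = φ₂) :
    ∫ t in t₀..t₂, I t * deriv φ t = (2 * h / L) * (φ₂ - φ₁) := by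
  obtain ⟨hC, hI⟩ := hadm
  have hd : Differentiable ℝ φ := hC.differentiable (by norm_num)
  have hc : Continuous (deriv φ) := hC.continuous_deriv (by norm_num)
  have hcφ : Continuous φ := hd.continuous
  have hfun : (fun t => I t * deriv φ t)
      = fun t => (φ t * deriv φ t + h * |deriv φ t|) / L := by
    funext t
    rcases lt_trichotomy (deriv φ t) 0 with ht | ht | ht
    · rw [(hI t).2 ht, abs_of_neg ht]; ring
    · simp [ht]
    · rw [(hI t).1 ht, abs_of_pos ht]; ring
  have hcont : Continuous (fun t => (φ t * deriv φ t + h * |deriv φ t|) / L) := by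
    fun_prop
  rw [hfun]
  have key : ∀ c t : ℝ, HasDerivAt (fun s => (φ s ^ 2 / 2 + c * φ s) / L)
      ((φ t * deriv φ t + c * deriv φ t) / L) t := by
    intro c t
    have h := (hd t).hasDerivAt
    have := (((h.pow 2).div_const 2).add (h.const_mul c)).div_const L
    refine this.congr_deriv ?_
    norm_num
    ring
  have hck : ∀ c : ℝ, Continuous (fun s => (φ s ^ 2 / 2 + c * φ s) / L) := by
    intro c; fun_prop
  have e1 := intervalIntegral.integral_eq_sub_of_hasDerivAt_of_le h01
    (f := fun s => (φ s ^ 2 / 2 + h * φ s) / L)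
    (f' := fun t => (φ t * deriv φ t + h * |deriv φ t|) / L)
    (hck h).continuousOn (by
      intro t ht
      have hn : 0 ≤ deriv φ t := by
        rw [← derivWithin_of_mem_nhds (Icc_mem_nhds ht.1 ht.2)]
        exact hmono.derivWithin_nonneg
      rw [abs_of_nonneg hn]
      exact key h t) (hcont.intervalIntegrable _ _)
  have e2 := intervalIntegral.integral_eq_sub_of_hasDerivAt_of_le h12
    (f := fun s => (φ s ^ 2 / 2 + (-h) * φ s) / L)
    (f' := fun t => (φ t * deriv φ t + h * |deriv φ t|) / L)
    (hck (-h)).continuousOn (by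
      intro t ht
      have hn : deriv φ t ≤ 0 := by
        rw [← derivWithin_of_mem_nhds (Icc_mem_nhds ht.1 ht.2)]
        exact hanti.derivWithin_nonpos
      rw [abs_of_nonpos hn]
      refine (key (-h) t).congr_deriv ?_
      ring) (hcont.intervalIntegrable _ _)
  rw [← intervalIntegral.integral_add_adjacent_intervals
    (hcont.intervalIntegrable t₀ t₁) (hcont.intervalIntegrable t₁ t₂), e1, e2]
  simp only [h0, h1, h2]
  ring
end

section
/- (Achievability of the available storage.) Let (φ, I) be an admissible backlash trajectory and let 0 ≤ T be such that φ'(t) ≤ 0 for all t ∈ [0, T], φ(0) = φ₀, and φ(T) = h. Then the extracted energy equals −∫_0^T I(t)·φ'(t) dt = (φ₀ − h)²/(2L). -/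
theorem stmt8 (L h : ℝ) (hL : 0 < L) (hh : 0 ≤ h)
    (φ I : ℝ → ℝ) (hadm : AdmissibleBacklash L h φ I)
    (T φ₀ : ℝ) (hT : 0 ≤ T)
    (hdec : ∀ t ∈ Set.Icc (0 : ℝ) T, deriv φ t ≤ 0)
    (h0 : φ 0 = φ₀) (hT' : φ T = h) :
    -∫ t in (0 : ℝ)..T, I t * deriv φ t = (φ₀ - h) ^ 2 / (2 * L) := by
  obtain ⟨hc, hI⟩ := hadm
  have hd : ∀ t, HasDerivAt φ (deriv φ t) t := fun t =>
    ((hc.differentiable (by norm_num)) t).hasDerivAt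
  have hcd : Continuous (deriv φ) := hc.continuous_deriv (by norm_num)
  have hcont : Continuous φ := hc.continuous
  have e : ∫ t in (0 : ℝ)..T, I t * deriv φ t
      = ∫ t in (0 : ℝ)..T, (φ t - h) / L * deriv φ t := by
    apply intervalIntegral.integral_congr
    intro t ht
    rw [Set.uIcc_of_le hT] at ht
    rcases (hdec t ht).lt_or_eq with h1 | h1
    · simp only [(hI t).2 h1]
    · simp only [h1, mul_zero]
  have hF : ∀ t ∈ Set.uIcc 0 T,
      HasDerivAt (fun t => (φ t - h) ^ 2 / (2 * L)) ((φ t - h) / L * deriv φ t) t := by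
    intro t _
    have := (((hd t).sub_const h).pow 2).div_const (2 * L)
    refine this.congr_deriv ?_
    have hL0 : L ≠ 0 := ne_of_gt hL
    norm_num
    field_simp
  rw [e, intervalIntegral.integral_eq_sub_of_hasDerivAt hF
    (Continuous.intervalIntegrable (by fun_prop) _ _), hT', h0]
  ring
end

section
/- (Available storage upper bound, Proposition 3.) For every admissible backlash trajectory (φ, I) and every T ≥ 0, the extracted energy satisfies −∫_0^T I(t)·φ'(t) dt ≤ S^a(φ(0)), where S^a : ℝ → ℝ is defined by S^a(ψ) = (ψ−h)²/(2L) for ψ > h, S^a(ψ) = (ψ+h)²/(2L) for ψ < −h, and S^a(ψ) = 0 for |ψ| ≤ h. -/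
/-- The available storage of the backlash inductor. -/
noncomputable def Sa (L h ψ : ℝ) : ℝ :=
  if h < ψ then (ψ - h) ^ 2 / (2 * L)
  else if ψ < -h then (ψ + h) ^ 2 / (2 * L)
  else 0

theorem stmt9 (L h : ℝ) (hL : 0 < L) (hh : 0 ≤ h)
    (φ I : ℝ → ℝ) (hadm : AdmissibleBacklash L h φ I)
    (T : ℝ) (hT : 0 ≤ T) :
    -∫ t in (0 : ℝ)..T, I t * deriv φ t ≤ Sa L h (φ 0) := by
  obtain ⟨hC, hI⟩ := hadm
  have hd : Differentiable ℝ φ := hC.differentiable (by norm_num)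
  have hc : Continuous (deriv φ) := hC.continuous_deriv (le_refl _)
  have hφc : Continuous φ := hC.continuous
  have e1 : ∀ t, I t * deriv φ t = φ t * deriv φ t / L + h / L * |deriv φ t| := by
    intro t
    rcases lt_trichotomy (deriv φ t) 0 with h1 | h1 | h1
    · rw [(hI t).2 h1, abs_of_neg h1]; ring
    · rw [h1]; simp
    · rw [(hI t).1 h1, abs_of_pos h1]; ring
  have e2 : ∫ t in (0 : ℝ)..T, φ t * deriv φ t / L = (φ T) ^ 2 / (2 * L) - (φ 0) ^ 2 / (2 * L) := by
    apply intervalIntegral.integral_eq_sub_of_hasDerivAt (f := fun t => (φ t) ^ 2 / (2 * L))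
    · intro t _
      have := (((hd t).hasDerivAt).pow 2).div_const (2 * L)
      refine HasDerivAt.congr_deriv this ?_
      have hL' : L ≠ 0 := hL.ne'
      norm_num
      field_simp
    · exact Continuous.intervalIntegrable (by fun_prop) _ _
  have e3 : ∫ t in (0 : ℝ)..T, deriv φ t = φ T - φ 0 :=
    intervalIntegral.integral_deriv_eq_sub (fun t _ => hd t) (hc.intervalIntegrable _ _)
  have e4 : |φ T - φ 0| ≤ ∫ t in (0 : ℝ)..T, |deriv φ t| := by
    rw [← e3]
    exact intervalIntegral.abs_integral_le_integral_abs hT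
  have e5 : ∫ t in (0 : ℝ)..T, I t * deriv φ t =
      (φ T) ^ 2 / (2 * L) - (φ 0) ^ 2 / (2 * L) + h / L * ∫ t in (0 : ℝ)..T, |deriv φ t| := by
    simp_rw [e1]
    rw [intervalIntegral.integral_add, e2, intervalIntegral.integral_const_mul]
    · exact Continuous.intervalIntegrable (by fun_prop) _ _
    · exact Continuous.intervalIntegrable (by fun_prop) _ _
  have e6 := mul_le_mul_of_nonneg_left e4 (div_nonneg hh hL.le)
  rw [e5]
  generalize φ T = b at *
  generalize φ 0 = a at *
  suffices H : a ^ 2 / (2 * L) - b ^ 2 / (2 * L) - h / L * |b - a| ≤ Sa L h a by linarith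
  have e7 : a ^ 2 / (2 * L) - b ^ 2 / (2 * L) - h / L * |b - a|
      = (a ^ 2 - b ^ 2 - 2 * (h * |b - a|)) / (2 * L) := by
    field_simp
  have k1 := mul_le_mul_of_nonneg_left (le_abs_self (b - a)) hh
  have k2 := mul_le_mul_of_nonneg_left (neg_abs_le (b - a)) hh
  rw [e7]
  unfold Sa
  split_ifs with c1 c2
  · gcongr
    nlinarith [sq_nonneg (b - h)]
  · gcongr
    nlinarith [sq_nonneg (b + h)]
  · apply div_nonpos_of_nonpos_of_nonneg _ (by positivity)
    push Not at c1 c2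
    rcases abs_cases (b - a) with ⟨k, k'⟩ | ⟨k, k'⟩ <;> rw [k] <;> nlinarith [sq_nonneg (b - a)]
end

section
/- (No energy extraction from the ground state.) For every admissible backlash trajectory (φ, I) with |φ(0)| ≤ h and every T ≥ 0, one has −∫_0^T I(t)·φ'(t) dt ≤ 0; that is, no energy can be extracted starting from a ground state. -/
theorem stmt10 (L h : ℝ) (hL : 0 < L) (hh : 0 ≤ h)
    (φ I : ℝ → ℝ) (hadm : AdmissibleBacklash L h φ I)
    (hground : |φ 0| ≤ h) (T : ℝ) (hT : 0 ≤ T) :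
    -∫ t in (0 : ℝ)..T, I t * deriv φ t ≤ 0 := by
  obtain ⟨hc, hI⟩ := hadm
  have hd : Continuous (deriv φ) := hc.continuous_deriv le_rfl
  have hφ : Continuous φ := hc.continuous
  have hdiff : ∀ t, HasDerivAt φ (deriv φ t) t := fun t =>
    (hc.differentiable (by norm_num) t).hasDerivAt
  have heq : (fun t => I t * deriv φ t) =
      fun t => (φ t * deriv φ t + h * |deriv φ t|) / L := by
    funext t
    rcases lt_trichotomy (deriv φ t) 0 with h1 | h1 | h1
    · rw [(hI t).2 h1, abs_of_neg h1]; ring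
    · simp [h1]
    · rw [(hI t).1 h1, abs_of_pos h1]; ring
  have h1 : ∫ t in (0:ℝ)..T, φ t * deriv φ t = φ T ^ 2 / 2 - φ 0 ^ 2 / 2 := by
    apply intervalIntegral.integral_eq_sub_of_hasDerivAt (f := fun t => φ t ^ 2 / 2)
    · intro t _
      have := ((hdiff t).pow 2).div_const 2
      refine this.congr_deriv ?_
      simp
      ring
    · exact (hφ.mul hd).intervalIntegrable _ _
  have h2 : ∫ t in (0:ℝ)..T, deriv φ t = φ T - φ 0 :=
    intervalIntegral.integral_eq_sub_of_hasDerivAt (fun t _ => hdiff t)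
      (hd.intervalIntegrable _ _)
  have h3 : |φ T - φ 0| ≤ ∫ t in (0:ℝ)..T, |deriv φ t| := by
    rw [← h2]
    exact intervalIntegral.abs_integral_le_integral_abs hT
  have h4 := mul_le_mul_of_nonneg_left h3 hh
  have i1 : IntervalIntegrable (fun t => φ t * deriv φ t) MeasureTheory.volume 0 T :=
    (hφ.mul hd).intervalIntegrable _ _
  have i2 : IntervalIntegrable (fun t => h * |deriv φ t|) MeasureTheory.volume 0 T :=
    (continuous_const.mul hd.abs).intervalIntegrable _ _
  rw [heq, intervalIntegral.integral_div, intervalIntegral.integral_add i1 i2,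
    intervalIntegral.integral_const_mul, h1, neg_nonpos]
  apply div_nonneg _ hL.le
  obtain ⟨ha, hb⟩ := abs_le.mp hground
  rcases le_total 0 (φ T - φ 0) with h5 | h5
  · rw [abs_of_nonneg h5] at h4
    nlinarith [mul_nonneg h5 (by linarith : 0 ≤ φ 0 + h)]
  · rw [abs_of_nonpos h5] at h4
    nlinarith [mul_nonneg (neg_nonneg.mpr h5) (by linarith : 0 ≤ h - φ 0)]
end

section
/- (Required supply lower bound, Proposition 4.) For every admissible backlash trajectory (φ, I) with φ(t₀) = 0 and every t₁ ≥ t₀, the supplied energy satisfies ∫_{t₀}^{t₁} I(t)·φ'(t) dt ≥ S^r(φ(t₁)), where S^r : ℝ → ℝ is defined by S^r(ψ) = ((ψ+h)² − h²)/(2L) for ψ ≥ 0 and S^r(ψ) = ((ψ−h)² − h²)/(2L) for ψ ≤ 0. -/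
/-- The required supply of the backlash inductor (ground state at the origin). -/
noncomputable def Sr (L h ψ : ℝ) : ℝ :=
  if 0 ≤ ψ then ((ψ + h) ^ 2 - h ^ 2) / (2 * L)
  else ((ψ - h) ^ 2 - h ^ 2) / (2 * L)

theorem stmt11 (L h : ℝ) (hL : 0 < L) (hh : 0 ≤ h)
    (φ I : ℝ → ℝ) (hadm : AdmissibleBacklash L h φ I)
    (t₀ t₁ : ℝ) (h0 : φ t₀ = 0) (h01 : t₀ ≤ t₁) :
    Sr L h (φ t₁) ≤ ∫ t in t₀..t₁, I t * deriv φ t := by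
  obtain ⟨hc, hI⟩ := hadm
  have hd : Continuous (deriv φ) := hc.continuous_deriv le_rfl
  have hφ : Continuous φ := hc.continuous
  have hder : ∀ t, HasDerivAt φ (deriv φ t) t := fun t =>
    ((hc.differentiable (by norm_num)) t).hasDerivAt
  have e : ∀ t, I t * deriv φ t = (φ t * deriv φ t + h * |deriv φ t|) / L := by
    intro t
    rcases lt_trichotomy (deriv φ t) 0 with h1 | h1 | h1
    · rw [(hI t).2 h1, abs_of_neg h1]; ring
    · simp [h1]
    · rw [(hI t).1 h1, abs_of_pos h1]; ring
  simp_rw [e]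
  have key : ∀ c : ℝ, |c| ≤ h → ((φ t₁ + c) ^ 2 - c ^ 2) / (2 * L) ≤
      ∫ t in t₀..t₁, (φ t * deriv φ t + h * |deriv φ t|) / L := by
    intro c hcc
    have F : ∫ t in t₀..t₁, (φ t * deriv φ t + c * deriv φ t) / L =
        (φ t₁ + c) ^ 2 / (2 * L) - (φ t₀ + c) ^ 2 / (2 * L) := by
      apply intervalIntegral.integral_eq_sub_of_hasDerivAt (f := fun t => (φ t + c) ^ 2 / (2 * L))
      · intro t _
        have := (((hder t).add_const c).pow 2).div_const (2 * L)
        refine this.congr_deriv ?_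
        push_cast
        field_simp
        try ring
      · exact Continuous.intervalIntegrable (by fun_prop) _ _
    have M : ∫ t in t₀..t₁, (φ t * deriv φ t + c * deriv φ t) / L ≤
        ∫ t in t₀..t₁, (φ t * deriv φ t + h * |deriv φ t|) / L := by
      apply intervalIntegral.integral_mono_on h01
      · exact Continuous.intervalIntegrable (by fun_prop) _ _
      · exact Continuous.intervalIntegrable (by fun_prop) _ _
      · intro t _
        have h2 : c * deriv φ t ≤ h * |deriv φ t| := by
          calc c * deriv φ t ≤ |c * deriv φ t| := le_abs_self _
            _ = |c| * |deriv φ t| := abs_mul _ _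
            _ ≤ _ := by gcongr
        gcongr
    rw [F, h0] at M
    refine le_trans (le_of_eq ?_) M
    ring
  unfold Sr
  split_ifs
  · exact key h (abs_of_nonneg hh).le
  · have := key (-h) (by rw [abs_neg, abs_of_nonneg hh])
    simpa [sub_eq_add_neg] using this
end

section
/- (Passivity of the port-Hamiltonian backlash inductor.) For all t₀ ≤ t₁, H_bf(φ(t₁)) − H_bf(φ(t₀)) ≤ ∫_{t₀}^{t₁} I(t)·φ'(t) dt; that is, the backlash inductor is passive with respect to the port variables (V, I) with V = φ' and supply rate I·V. -/
/-- The quadratic Hamiltonian of the backlash inductor. -/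
noncomputable def Hbf (L φ : ℝ) : ℝ := φ ^ 2 / (2 * L)

theorem stmt15 (L h : ℝ) (hL : 0 < L) (hh : 0 ≤ h)
    (φ s I : ℝ → ℝ) (hφ : ContDiff ℝ 1 φ)
    (hs1 : ∀ t, |s t| ≤ 1) (hs2 : ∀ t, s t * deriv φ t = |deriv φ t|)
    (hI : ∀ t, I t = φ t / L + (h / L) * s t) :
    ∀ t₀ t₁ : ℝ, t₀ ≤ t₁ →
      Hbf L (φ t₁) - Hbf L (φ t₀) ≤ ∫ t in t₀..t₁, I t * deriv φ t := by
  intro t₀ t₁ ht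
  have hd : Continuous (deriv φ) := hφ.continuous_deriv le_rfl
  have hc : Continuous φ := hφ.continuous
  have e : ∀ t, I t * deriv φ t = φ t / L * deriv φ t + h / L * |deriv φ t| := by
    intro t
    rw [hI, ← hs2]
    ring
  have c1 : Continuous (fun t => φ t / L * deriv φ t) := (hc.div_const L).mul hd
  have c2 : Continuous (fun t => h / L * |deriv φ t|) := continuous_const.mul hd.abs
  have key : ∫ t in t₀..t₁, φ t / L * deriv φ t = Hbf L (φ t₁) - Hbf L (φ t₀) := by
    refine intervalIntegral.integral_eq_sub_of_hasDerivAt (f := fun t => Hbf L (φ t)) ?_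
      (c1.intervalIntegrable _ _)
    intro t _
    have h1 : HasDerivAt φ (deriv φ t) t :=
      ((hφ.differentiable (by norm_num)) t).hasDerivAt
    have h2 := (h1.pow 2).div_const (2 * L)
    have h3 : HasDerivAt (fun t => Hbf L (φ t)) _ t := h2
    refine h3.congr_deriv ?_
    have hL' : L ≠ 0 := hL.ne'
    push_cast
    field_simp
    try norm_num
  simp_rw [e]
  rw [intervalIntegral.integral_add (c1.intervalIntegrable _ _) (c2.intervalIntegrable _ _), key]
  have : 0 ≤ ∫ t in t₀..t₁, h / L * |deriv φ t| :=
    intervalIntegral.integral_nonneg ht (fun t _ => by positivity)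
  linarith
end

section
/- (Energy balance of the parallel RLC network with backlash inductor.) For all t₀ ≤ t₁, H(t₁) − H(t₀) = ∫_{t₀}^{t₁} ( u(t)·V(t) − V(t)²/R − (h/L)·|V(t)| ) dt; that is, the change of stored energy equals the supplied energy minus the resistive loss V²/R and the hysteretic loss (h/L)|V|. -/
theorem stmt16 (L C R h : ℝ) (hL : 0 < L) (hC : 0 < C) (hR : 0 < R) (hh : 0 ≤ h)
    (φ Q u s : ℝ → ℝ)
    (hφ : Differentiable ℝ φ) (hQ : Differentiable ℝ Q) (hu : Continuous u)
    (hs1 : ∀ t, |s t| ≤ 1) (hs2 : ∀ t, s t * (Q t / C) = |Q t / C|)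
    (hode1 : ∀ t, deriv φ t = Q t / C)
    (hode2 : ∀ t, deriv Q t = u t - Q t / (R * C) - φ t / L - (h / L) * s t)
    (V : ℝ → ℝ) (hV : ∀ t, V t = Q t / C)
    (H : ℝ → ℝ) (hH : ∀ t, H t = φ t ^ 2 / (2 * L) + Q t ^ 2 / (2 * C)) :
    ∀ t₀ t₁ : ℝ, t₀ ≤ t₁ →
      H t₁ - H t₀ =
        ∫ t in t₀..t₁, (u t * V t - V t ^ 2 / R - (h / L) * |V t|) := by
  intro t₀ t₁ _
  have hVc : Continuous V := by
    have e : V = fun t => Q t / C := funext hV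
    rw [e]
    exact hQ.continuous.div_const C
  symm
  apply intervalIntegral.integral_eq_sub_of_hasDerivAt
  · intro t _
    have e : H = fun t => φ t ^ 2 / (2 * L) + Q t ^ 2 / (2 * C) := funext hH
    rw [e]
    have h1 := (((hφ t).hasDerivAt.pow 2).div_const (2 * L)).add
      (((hQ t).hasDerivAt.pow 2).div_const (2 * C))
    refine h1.congr_deriv ?_
    rw [hode1, hode2, hV, ← hs2]
    field_simp
    push_cast
    ring
  · apply Continuous.intervalIntegrable
    exact ((hu.mul hVc).sub ((hVc.pow 2).div_const R)).sub (continuous_const.mul hVc.abs)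
end

section
/- (Energy balance of the series RLC network with backlash inductor.) For all t₀ ≤ t₁, H(t₁) − H(t₀) = ∫_{t₀}^{t₁} ( I(t)·v(t) − R·I(t)² − (h/L)·|φ'(t)| ) dt; that is, the change of stored energy equals the supplied energy minus the resistive loss R·I² and the hysteretic loss (h/L)|φ'|. -/
theorem stmt18 (L C R h : ℝ) (hL : 0 < L) (hC : 0 < C) (hR : 0 < R) (hh : 0 ≤ h)
    (φ Q v s : ℝ → ℝ)
    (hφ : Differentiable ℝ φ) (hQ : Differentiable ℝ Q) (hv : Continuous v)
    (hscont : Continuous s)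
    (hs1 : ∀ t, |s t| ≤ 1) (hs2 : ∀ t, s t * deriv φ t = |deriv φ t|)
    (I : ℝ → ℝ) (hI : ∀ t, I t = φ t / L + (h / L) * s t)
    (hode1 : ∀ t, deriv φ t = v t - R * I t - Q t / C)
    (hode2 : ∀ t, deriv Q t = I t)
    (H : ℝ → ℝ) (hH : ∀ t, H t = φ t ^ 2 / (2 * L) + Q t ^ 2 / (2 * C)) :
    ∀ t₀ t₁ : ℝ, t₀ ≤ t₁ →
      H t₁ - H t₀ =
        ∫ t in t₀..t₁, (I t * v t - R * I t ^ 2 - (h / L) * |deriv φ t|) := by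
  intro t₀ t₁ _
  have hIc : Continuous I := by
    have e : I = fun t => φ t / L + (h / L) * s t := funext hI
    rw [e]
    exact (hφ.continuous.div_const L).add (continuous_const.mul hscont)
  have hdc : Continuous (deriv φ) := by
    have e : deriv φ = fun t => v t - R * I t - Q t / C := funext hode1
    rw [e]
    exact (hv.sub (continuous_const.mul hIc)).sub (hQ.continuous.div_const C)
  have hd : ∀ t, HasDerivAt H (I t * v t - R * I t ^ 2 - (h / L) * |deriv φ t|) t := by
    intro t
    have e : H = fun t => φ t ^ 2 / (2 * L) + Q t ^ 2 / (2 * C) := funext hH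
    rw [e]
    have h1 := (((hφ t).hasDerivAt.fun_pow 2).div_const (2 * L)).fun_add
      (((hQ t).hasDerivAt.fun_pow 2).div_const (2 * C))
    refine h1.congr_deriv ?_
    have h2 : φ t / L = I t - (h / L) * s t := by rw [hI t]; ring
    have h3 : Q t / C = v t - R * I t - deriv φ t := by rw [hode1 t]; ring
    calc _ = φ t / L * deriv φ t + Q t / C * deriv Q t := by
            norm_num
            field_simp
      _ = _ := by
            rw [h2, h3, hode2 t, ← hs2 t]
            ring
  symm
  apply intervalIntegral.integral_eq_sub_of_hasDerivAt (fun t _ => hd t)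
  apply Continuous.intervalIntegrable
  exact ((hIc.mul hv).sub (continuous_const.mul (hIc.pow 2))).sub
    (continuous_const.mul hdc.abs)
end

section
/- (Passivity of the series RLC network with backlash inductor.) For all t₀ ≤ t₁, H(t₁) − H(t₀) ≤ ∫_{t₀}^{t₁} I(t)·v(t) dt; that is, the series network is passive with respect to the port (v, I) with supply rate I·v. -/
theorem stmt19 (L C R h : ℝ) (hL : 0 < L) (hC : 0 < C) (hR : 0 < R) (hh : 0 ≤ h)
    (φ Q v s : ℝ → ℝ)
    (hφ : Differentiable ℝ φ) (hQ : Differentiable ℝ Q) (hv : Continuous v)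
    (hscont : Continuous s)
    (hs1 : ∀ t, |s t| ≤ 1) (hs2 : ∀ t, s t * deriv φ t = |deriv φ t|)
    (I : ℝ → ℝ) (hI : ∀ t, I t = φ t / L + (h / L) * s t)
    (hode1 : ∀ t, deriv φ t = v t - R * I t - Q t / C)
    (hode2 : ∀ t, deriv Q t = I t)
    (H : ℝ → ℝ) (hH : ∀ t, H t = φ t ^ 2 / (2 * L) + Q t ^ 2 / (2 * C)) :
    ∀ t₀ t₁ : ℝ, t₀ ≤ t₁ →
      H t₁ - H t₀ ≤ ∫ t in t₀..t₁, I t * v t := by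
  intro t₀ t₁ h01
  have hIc : Continuous I := by
    have : I = fun t => φ t / L + (h / L) * s t := funext hI
    rw [this]
    have := hφ.continuous
    fun_prop
  have hφc := hφ.continuous
  have hQc := hQ.continuous
  have hd : ∀ t, HasDerivAt H (φ t * (v t - R * I t - Q t / C) / L + Q t * I t / C) t := by
    intro t
    have e : H = fun t => φ t ^ 2 / (2 * L) + Q t ^ 2 / (2 * C) := funext hH
    rw [e]
    have h1 := (hφ t).hasDerivAt
    have h2 := (hQ t).hasDerivAt
    rw [hode1] at h1
    rw [hode2] at h2
    refine (((h1.pow 2).div_const (2 * L)).add ((h2.pow 2).div_const (2 * C))).congr_deriv ?_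
    field_simp
    ring
  have hc : Continuous fun t => φ t * (v t - R * I t - Q t / C) / L + Q t * I t / C := by
    fun_prop
  rw [← intervalIntegral.integral_eq_sub_of_hasDerivAt (fun t _ => hd t)
    (hc.intervalIntegrable _ _)]
  refine intervalIntegral.integral_mono_on h01 (hc.intervalIntegrable _ _)
    ((hIc.mul hv).intervalIntegrable _ _) ?_
  intro t _
  have k : φ t / L = I t - (h / L) * s t := by rw [hI]; ring
  have k2 := hs2 t
  rw [hode1] at k2
  have k3 : 0 ≤ (h / L) * |v t - R * I t - Q t / C| := by positivity
  have k4 : 0 ≤ R * I t ^ 2 := by positivity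
  have k5 : φ t * (v t - R * I t - Q t / C) / L + Q t * I t / C
      = I t * v t - R * I t ^ 2 - (h / L) * |v t - R * I t - Q t / C| := by
    rw [← k2, mul_div_right_comm, k]
    ring
  linarith
end
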